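/- arXiv:1502.06144 — 2 statements merged into one kernel-verified Lean document; each statement's English description precedes it below -/
import Mathlib

section
/- Fix k ≥ 1 and Δ > Δ_k, and for each n ≥ k let m = ⌈Δ n⌉ and let V = (V_1,…,V_m) be m i.i.d. uniform k-flats of F_2^n. Then P_unif(V is flat-satisfiable) → 0 as n → ∞. -/
open scoped BigOperators Classical
open Filter Topology

abbrev F2n (n : ℕ) := Fin n → ZMod 2

def IsFlat (n k : ℕ) (W : Set (F2n n)) : Prop :=
  ∃ A : AffineSubspace (ZMod 2) (F2n n),
    (A : Set (F2n n)) = W ∧ W.Nonempty ∧ Module.finrank (ZMod 2) A.direction = n - k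

def Flat (n k : ℕ) : Type := {W : Set (F2n n) // IsFlat n k W}

noncomputable instance (n k : ℕ) : Fintype (Flat n k) := by
  unfold Flat; exact Fintype.ofFinite _

noncomputable def q0 (n k : ℕ) : Flat n k → ℝ :=
  fun _ => (Fintype.card (Flat n k) : ℝ)⁻¹

noncomputable def qx (n k : ℕ) (x : F2n n) : Flat n k → ℝ :=
  fun W => if x ∈ W.1 then 0 else (Nat.card {W : Flat n k // x ∉ W.1} : ℝ)⁻¹

noncomputable def prob {α : Type*} [Fintype α] (p : α → ℝ) (E : Set α) : ℝ :=
  ∑ a, if a ∈ E then p a else 0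

noncomputable def expect {α : Type*} [Fintype α] (p : α → ℝ) (f : α → ℝ) : ℝ :=
  ∑ a, p a * f a

noncomputable def Punif (n k m : ℕ) : (Fin m → Flat n k) → ℝ :=
  fun V => ∏ j, q0 n k (V j)

noncomputable def Pplanted (n k m : ℕ) : (Fin m → Flat n k) → ℝ :=
  fun V => ((2:ℝ)^n)⁻¹ * ∑ x : F2n n, ∏ j, qx n k x (V j)

noncomputable def Z (n k m : ℕ) (V : Fin m → Flat n k) : ℕ :=
  Nat.card {x : F2n n // ∀ j, x ∉ (V j).1}

noncomputable def satCount (n k m : ℕ) (V : Fin m → Flat n k) (x : F2n n) : ℕ :=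
  Nat.card {j : Fin m // x ∉ (V j).1}

noncomputable def maxSat (n k m : ℕ) (V : Fin m → Flat n k) : ℕ :=
  Finset.univ.sup (fun x : F2n n => satCount n k m V x)

noncomputable def qxpi (n k : ℕ) (x : F2n n) (π : ℝ) : Flat n k → ℝ :=
  fun W => (1 - π) * q0 n k W + π * qx n k x W

noncomputable def Pplantedpi (n k m : ℕ) (π : ℝ) : (Fin m → Flat n k) → ℝ :=
  fun V => ((2:ℝ)^n)⁻¹ * ∑ x : F2n n, ∏ j, qxpi n k x π (V j)

noncomputable def DeltaK (k : ℕ) : ℝ :=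
  Real.log (1/2) / Real.log (1 - ((2:ℝ)^k)⁻¹)

/-!
First moment method. The law of a uniform `k`-flat is translation invariant, so the flat contains
each given point with probability `2⁻ᵏ`. Hence `E[Z] = 2ⁿ (1 - 2⁻ᵏ)ᵐ`, which bounds `P(Z > 0)` by
Markov's inequality. `Δ_k` is the value of `Δ` at which `2 (1 - 2⁻ᵏ)^Δ = 1`, so above it the bound
decays geometrically.
-/

section FiniteProbability

variable {α : Type*} [Fintype α]

lemma prob_nonneg {p : α → ℝ} (hp : ∀ a, 0 ≤ p a) (E : Set α) : 0 ≤ prob p E :=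
  Finset.sum_nonneg fun a _ => by split_ifs <;> simp [hp a]

lemma prob_compl {p : α → ℝ} (hp : ∑ a, p a = 1) (E : Set α) : prob p Eᶜ = 1 - prob p E := by
  rw [eq_sub_iff_add_eq, ← hp, prob, prob, ← Finset.sum_add_distrib]
  refine Finset.sum_congr rfl fun a _ => ?_
  by_cases ha : a ∈ E <;> simp [ha]

lemma prob_pi {ι : Type*} [Fintype ι] [DecidableEq ι] {β : ι → Type*}
    [∀ i, Fintype (β i)] (p : ∀ i, β i → ℝ) (E : ∀ i, Set (β i)) :
    prob (fun b : ∀ i, β i => ∏ i, p i (b i)) {b | ∀ i, b i ∈ E i} = ∏ i, prob (p i) (E i) := by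
  simp only [prob, Set.mem_ofPred_eq, Finset.prod_univ_sum, Fintype.piFinset_univ,
    Fintype.prod_ite_zero]

lemma prob_pos_le_expect {p : α → ℝ} (hp : ∀ a, 0 ≤ p a) (f : α → ℕ) :
    prob p {a | 0 < f a} ≤ expect p fun a => (f a : ℝ) := by
  refine Finset.sum_le_sum fun a _ => ?_
  split_ifs with ha
  · have hf : (1 : ℝ) ≤ f a := by exact_mod_cast ha
    exact le_mul_of_one_le_right (hp a) hf
  · exact mul_nonneg (hp a) (f a).cast_nonneg

lemma expect_natCard {β : Type*} [Fintype β] (p : α → ℝ) (r : α → β → Prop) :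
    expect p (fun a => (Nat.card {b // r a b} : ℝ)) = ∑ b, prob p {a | r a b} := by
  simp only [expect, prob, Set.mem_ofPred_eq]
  rw [Finset.sum_comm]
  refine Finset.sum_congr rfl fun a _ => ?_
  rw [← Finset.sum_filter, Finset.sum_const, nsmul_eq_mul, mul_comm, Nat.card_eq_fintype_card,
    Fintype.card_subtype]

end FiniteProbability

section Flats

open scoped Pointwise

variable {n k : ℕ}

lemma IsFlat.vadd {W : Set (F2n n)} (hW : IsFlat n k W) (v : F2n n) : IsFlat n k (v +ᵥ W) := by
  obtain ⟨A, rfl, hne, hdim⟩ := hW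
  exact ⟨v +ᵥ A, AffineSubspace.coe_pointwise_vadd v A, hne.vadd_set,
    by rwa [AffineSubspace.pointwise_vadd_direction]⟩

lemma isFlat_vadd_iff (v : F2n n) (W : Set (F2n n)) : IsFlat n k (v +ᵥ W) ↔ IsFlat n k W :=
  ⟨fun h => neg_vadd_vadd v W ▸ h.vadd (-v), fun h => h.vadd v⟩

/-- Translation by `v`, as a permutation of the `k`-flats. -/
def Flat.translate (v : F2n n) : Equiv.Perm (Flat n k) :=
  (AddAction.toPerm v).subtypeEquiv fun W => (isFlat_vadd_iff v W).symm

lemma Flat.mem_translate {v x : F2n n} {W : Flat n k} :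
    x ∈ (Flat.translate v W).1 ↔ -v + x ∈ W.1 :=
  Set.mem_vadd_set_iff_neg_vadd_mem

lemma Flat.natCard_coe (W : Flat n k) : Nat.card W.1 = 2 ^ (n - k) := by
  obtain ⟨_, A, rfl, hne, hdim⟩ := W
  have : Nonempty A := hne.to_subtype
  calc Nat.card A = Nat.card A.direction :=
        Nat.card_congr (Equiv.vaddConst (Classical.arbitrary A)).symm
    _ = 2 ^ (n - k) := by rw [Module.natCard_eq_pow_finrank (K := ZMod 2), hdim, Nat.card_zmod]

instance Flat.instNonempty : Nonempty (Flat n k) := by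
  obtain ⟨f, hf⟩ := exists_linearIndependent_of_le_finrank (R := ZMod 2) (M := F2n n)
    (n := n - k) (by simp)
  refine ⟨_, (Submodule.span (ZMod 2) (Set.range f)).toAffineSubspace, rfl,
    ⟨0, Submodule.zero_mem _⟩, ?_⟩
  rw [Submodule.toAffineSubspace_direction, finrank_span_eq_card hf, Fintype.card_fin]

lemma q0_nonneg (W : Flat n k) : 0 ≤ q0 n k W :=
  inv_nonneg.mpr (Nat.cast_nonneg _)

lemma sum_q0 : ∑ W, q0 n k W = 1 := by
  simp [q0]

lemma prob_q0_mem_eq (x y : F2n n) :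
    prob (q0 n k) {W | x ∈ W.1} = prob (q0 n k) {W | y ∈ W.1} := by
  refine Fintype.sum_equiv (Flat.translate (y - x)) _ _ fun W => ?_
  simp [Flat.mem_translate, q0]

lemma prob_q0_mem (hkn : k ≤ n) (x : F2n n) : prob (q0 n k) {W | x ∈ W.1} = ((2 : ℝ) ^ k)⁻¹ := by
  have sum_over_points : (2 : ℝ) ^ n * prob (q0 n k) {W | x ∈ W.1} = 2 ^ (n - k) :=
    calc (2 : ℝ) ^ n * prob (q0 n k) {W | x ∈ W.1}
        = ∑ y, prob (q0 n k) {W | y ∈ W.1} := by simp [prob_q0_mem_eq _ x]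
      _ = expect (q0 n k) fun W => (Nat.card W.1 : ℝ) :=
          (expect_natCard (q0 n k) fun W y => y ∈ W.1).symm
      _ = 2 ^ (n - k) := by
          simp only [expect, Flat.natCard_coe, ← Finset.sum_mul, sum_q0, one_mul, Nat.cast_pow,
            Nat.cast_ofNat]
  rw [pow_sub₀ 2 two_ne_zero hkn] at sum_over_points
  exact mul_left_cancel₀ (pow_ne_zero n two_ne_zero) sum_over_points

lemma prob_q0_notMem (hkn : k ≤ n) (x : F2n n) :
    prob (q0 n k) {W | x ∉ W.1} = 1 - ((2 : ℝ) ^ k)⁻¹ := by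
  rw [← prob_q0_mem hkn x, ← prob_compl sum_q0]
  rfl

lemma Punif_nonneg {m : ℕ} (V : Fin m → Flat n k) : 0 ≤ Punif n k m V :=
  Finset.prod_nonneg fun j _ => q0_nonneg (V j)

lemma expect_Z (hkn : k ≤ n) (m : ℕ) :
    expect (Punif n k m) (fun V => (Z n k m V : ℝ)) = 2 ^ n * (1 - ((2 : ℝ) ^ k)⁻¹) ^ m := by
  have prob_avoid (x : F2n n) :
      prob (Punif n k m) {V | ∀ j, x ∉ (V j).1} = (1 - ((2 : ℝ) ^ k)⁻¹) ^ m :=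
    calc prob (Punif n k m) {V | ∀ j, x ∉ (V j).1}
        = ∏ _j : Fin m, prob (q0 n k) {W | x ∉ W.1} :=
          prob_pi (fun _ : Fin m => q0 n k) fun _ => {W | x ∉ W.1}
      _ = (1 - ((2 : ℝ) ^ k)⁻¹) ^ m := by simp [prob_q0_notMem hkn]
  calc expect (Punif n k m) (fun V => (Z n k m V : ℝ))
      = ∑ x, prob (Punif n k m) {V | ∀ j, x ∉ (V j).1} :=
        expect_natCard (Punif n k m) fun V x => ∀ j, x ∉ (V j).1
    _ = 2 ^ n * (1 - ((2 : ℝ) ^ k)⁻¹) ^ m := by simp [prob_avoid]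

lemma prob_Z_pos_le (hkn : k ≤ n) (m : ℕ) :
    prob (Punif n k m) {V | 0 < Z n k m V} ≤ 2 ^ n * (1 - ((2 : ℝ) ^ k)⁻¹) ^ m :=
  (prob_pos_le_expect Punif_nonneg _).trans_eq (expect_Z hkn m)

end Flats

lemma tendsto_pow_mul_pow_ceil_atTop_nhds_zero {a r Δ : ℝ} (ha : 0 < a) (hr₀ : 0 < r) (hr₁ : r < 1)
    (hΔ : Real.logb r a⁻¹ < Δ) :
    Tendsto (fun n : ℕ => a ^ n * r ^ ⌈Δ * n⌉₊) atTop (𝓝 0) := by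
  have ratio_lt_one : a * r ^ Δ < 1 := by
    rwa [Real.logb_lt_iff_lt_rpow_of_base_lt_one hr₀ hr₁ (inv_pos.mpr ha),
      ← one_div, lt_div_iff₀' ha] at hΔ
  refine squeeze_zero (fun n => by positivity) (fun n => ?_)
    (tendsto_pow_atTop_nhds_zero_of_lt_one (by positivity) ratio_lt_one)
  calc a ^ n * r ^ ⌈Δ * n⌉₊ = a ^ n * r ^ (⌈Δ * n⌉₊ : ℝ) := by rw [Real.rpow_natCast]
    _ ≤ a ^ n * r ^ (Δ * n) := by
        gcongr a ^ n * ?_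
        exact Real.rpow_le_rpow_of_exponent_ge hr₀ hr₁.le (Nat.le_ceil _)
    _ = (a * r ^ Δ) ^ n := by rw [Real.rpow_mul_natCast hr₀.le, mul_pow]

lemma DeltaK_eq_logb (k : ℕ) : DeltaK k = Real.logb (1 - ((2 : ℝ) ^ k)⁻¹) 2⁻¹ := by
  rw [DeltaK, one_div, Real.logb]

theorem stmt6 (k : ℕ) (hk : 1 ≤ k) (Δ : ℝ) (hΔk : DeltaK k < Δ) :
    Tendsto (fun n : ℕ =>
        prob (Punif n k ⌈Δ * (n:ℝ)⌉₊) {V | 0 < Z n k ⌈Δ * (n:ℝ)⌉₊ V})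
      atTop (nhds 0) := by
  have hpow : (1 : ℝ) < 2 ^ k := one_lt_pow₀ one_lt_two (by lia)
  have hr₀ : 0 < 1 - ((2 : ℝ) ^ k)⁻¹ := sub_pos.mpr (inv_lt_one_of_one_lt₀ hpow)
  have hr₁ : 1 - ((2 : ℝ) ^ k)⁻¹ < 1 := sub_lt_self 1 (by positivity)
  refine squeeze_zero' (.of_forall fun n => prob_nonneg Punif_nonneg _) ?_
    (tendsto_pow_mul_pow_ceil_atTop_nhds_zero two_pos hr₀ hr₁ (DeltaK_eq_logb k ▸ hΔk))
  filter_upwards [eventually_ge_atTop k] with n hkn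
  exact prob_Z_pos_le hkn _
end

section
/- Fix k ≥ 1 and 0 < Δ < Δ_k, and for each n ≥ k let m = ⌈Δ n⌉. Then the total variation distance between P_unif and P_planted, namely (1/2) Σ_V |P_planted(V) − P_unif(V)| where the sum runs over all m-tuples V of k-flats of F_2^n, tends to 0 as n → ∞. -/
open scoped BigOperators Classical
open Filter Topology

/-!
By Cauchy–Schwarz, the squared `L¹` distance between the planted and the uniform law is at most the
`χ²`-divergence, which is the average of `(N ⟨q_x, q_y⟩) ^ m - 1` over two independent hidden points
`x`, `y`, where `N` is the number of `k`-flats. The affine group is 2-transitive on points, so the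
complements of the `k`-flats are the blocks of a 2-design, and in a 2-design incidence with two
distinct points is negatively correlated: `N ⟨q_x, q_y⟩ ≤ 1` for `x ≠ y`. Only the diagonal remains.
It has probability `2⁻ⁿ` and contributes `(1 - 2⁻ᵏ)⁻ᵐ`, and `2⁻ⁿ (1 - 2⁻ᵏ)⁻ᵐ` tends to zero as long
as `m ≈ Δ n` with `Δ < Δ_k`.
-/

open scoped Finset

section SecondMoment

variable {X α : Type*} [Fintype X] [Fintype α]

lemma sq_sum_abs_sub_inv_card_le [Nonempty α] {p : α → ℝ} (hp : ∑ a, p a = 1) :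
    (∑ a, |p a - (Fintype.card α : ℝ)⁻¹|) ^ 2 ≤ Fintype.card α * ∑ a, p a ^ 2 - 1 := by
  have hN : (Fintype.card α : ℝ) ≠ 0 := Nat.cast_ne_zero.2 Fintype.card_ne_zero
  calc (∑ a, |p a - (Fintype.card α : ℝ)⁻¹|) ^ 2
      ≤ Fintype.card α * ∑ a, |p a - (Fintype.card α : ℝ)⁻¹| ^ 2 := sq_sum_le_card_mul_sum_sq
    _ = Fintype.card α * ∑ a, p a ^ 2 - 1 := by
        simp only [sq_abs, sub_sq, Finset.sum_add_distrib, Finset.sum_sub_distrib,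
          ← Finset.sum_mul, ← Finset.mul_sum, hp, Finset.sum_const, Finset.card_univ, nsmul_eq_mul]
        field_simp
        ring

/-- The law of `m` independent samples from `q x`, where the hidden parameter `x` is uniform. -/
noncomputable def productMixture (q : X → α → ℝ) (m : ℕ) (V : Fin m → α) : ℝ :=
  (Fintype.card X : ℝ)⁻¹ * ∑ x, ∏ j, q x (V j)

lemma sum_productMixture [Nonempty X] {q : X → α → ℝ} (hq : ∀ x, ∑ a, q x a = 1) (m : ℕ) :
    ∑ V, productMixture q m V = 1 := by
  simp only [productMixture, ← Finset.mul_sum]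
  rw [Finset.sum_comm]
  simp [← Fintype.sum_pow, hq]

lemma sum_productMixture_sq (q : X → α → ℝ) (m : ℕ) :
    ∑ V, productMixture q m V ^ 2 =
      (Fintype.card X : ℝ)⁻¹ ^ 2 * ∑ x, ∑ y, (∑ a, q x a * q y a) ^ m := by
  simp only [productMixture, mul_pow, ← Finset.mul_sum]
  congr 1
  simp only [sq, Finset.sum_mul_sum, ← Finset.prod_mul_distrib]
  rw [Finset.sum_comm]
  refine Finset.sum_congr rfl fun x _ ↦ ?_
  rw [Finset.sum_comm]
  simp only [Fintype.sum_pow]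

lemma sum_abs_productMixture_sub_uniform_le [Nonempty X] [Nonempty α] {q : X → α → ℝ} {C : ℝ}
    (hq₀ : ∀ x a, 0 ≤ q x a) (hq₁ : ∀ x, ∑ a, q x a = 1)
    (hdiag : ∀ x, Fintype.card α * ∑ a, q x a * q x a ≤ C)
    (hoff : ∀ x y, x ≠ y → Fintype.card α * ∑ a, q x a * q y a ≤ 1) (m : ℕ) :
    ∑ V : Fin m → α, |productMixture q m V - (Fintype.card α ^ m : ℝ)⁻¹| ≤
      √((Fintype.card X : ℝ)⁻¹ * C ^ m) := by
  have hcorr₀ (x y : X) : 0 ≤ Fintype.card α * ∑ a, q x a * q y a :=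
    mul_nonneg (Nat.cast_nonneg _) (Finset.sum_nonneg fun a _ ↦ mul_nonneg (hq₀ x a) (hq₀ y a))
  have hcorr (x y : X) :
      (Fintype.card α * ∑ a, q x a * q y a) ^ m ≤ (if x = y then C ^ m else 0) + 1 := by
    split_ifs with hxy
    · subst hxy
      exact (pow_le_pow_left₀ (hcorr₀ x x) (hdiag x) m).trans (le_add_of_nonneg_right zero_le_one)
    · rw [zero_add]
      exact pow_le_one₀ (hcorr₀ x y) (hoff x y hxy)
  have hX : (Fintype.card X : ℝ) ≠ 0 := Nat.cast_ne_zero.2 Fintype.card_ne_zero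
  have hchi := sq_sum_abs_sub_inv_card_le (sum_productMixture hq₁ m)
  rw [Fintype.card_fun, Fintype.card_fin, Nat.cast_pow] at hchi
  refine Real.le_sqrt_of_sq_le (hchi.trans ?_)
  calc (Fintype.card α : ℝ) ^ m * ∑ V, productMixture q m V ^ 2 - 1
      = (Fintype.card X : ℝ)⁻¹ ^ 2 * ∑ x, ∑ y, (Fintype.card α * ∑ a, q x a * q y a) ^ m - 1 := by
        simp only [sum_productMixture_sq, mul_pow, ← Finset.mul_sum]
        ring
    _ ≤ (Fintype.card X : ℝ)⁻¹ ^ 2 * ∑ x : X, ∑ y, ((if x = y then C ^ m else 0) + 1) - 1 := by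
        gcongr with x _ y _
        exact hcorr x y
    _ = (Fintype.card X : ℝ)⁻¹ * C ^ m := by
        simp only [Finset.sum_add_distrib, Finset.sum_ite_eq, Finset.mem_univ, if_true,
          Finset.sum_const, Finset.card_univ, nsmul_eq_mul, mul_one]
        field_simp
        ring

end SecondMoment

section UniformWeight

variable {α : Type*}

/-- The uniform probability distribution on `s`; for empty `s` it is the zero function. -/
noncomputable def uniformWeight (s : Finset α) (a : α) : ℝ :=
  if a ∈ s then (#s : ℝ)⁻¹ else 0

lemma uniformWeight_nonneg (s : Finset α) (a : α) : 0 ≤ uniformWeight s a := by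
  unfold uniformWeight
  positivity

lemma sum_uniformWeight [Fintype α] {s : Finset α} (hs : s.Nonempty) :
    ∑ a, uniformWeight s a = 1 := by
  have hcard : (#s : ℝ) ≠ 0 := Nat.cast_ne_zero.2 hs.card_ne_zero
  simp [uniformWeight, hcard]

lemma sum_uniformWeight_mul_uniformWeight [Fintype α] (s t : Finset α) :
    ∑ a, uniformWeight s a * uniformWeight t a = #(s ∩ t) / (#s * #t : ℝ) := by
  simp only [uniformWeight, ite_zero_mul_ite_zero, ← Finset.mem_inter, Finset.sum_ite_mem,
    Finset.univ_inter, Finset.sum_const, nsmul_eq_mul]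
  rw [← mul_inv, div_eq_mul_inv]

end UniformWeight

section TwoDesign

variable {X Ω : Type*} [Fintype Ω] {R : X → Ω → Prop} {b : ℕ}

/-- The set of blocks incident to the point `x` in the incidence structure `R`. -/
noncomputable def blocks (R : X → Ω → Prop) (x : X) : Finset Ω := {W | R x W}

lemma mem_blocks {x : X} {W : Ω} : W ∈ blocks R x ↔ R x W := by simp [blocks]

variable [Fintype X]

/-- A 2-design with block size `b`: the number of blocks through a point, and through a pair of
distinct points, does not depend on the choice of the points. Different elements of `Ω` may be
incident to the same points, so repeated blocks are allowed. -/
structure IsTwoDesign (R : X → Ω → Prop) (b : ℕ) : Prop where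
  card_points : ∀ W, #{x | R x W} = b
  card_blocks_eq : ∀ x x', #(blocks R x) = #(blocks R x')
  card_blocks_inter_eq : ∀ x y x' y', x ≠ y → x' ≠ y' →
    #(blocks R x ∩ blocks R y) = #(blocks R x' ∩ blocks R y')

namespace IsTwoDesign

lemma card_mul_card_blocks (h : IsTwoDesign R b) (x : X) :
    Fintype.card X * #(blocks R x) = Fintype.card Ω * b :=
  Finset.card_mul_eq_card_mul R (fun y _ ↦ h.card_blocks_eq y x) fun W _ ↦ h.card_points W

lemma sub_one_mul_card_blocks_inter (h : IsTwoDesign R b) {x y : X} (hxy : x ≠ y) :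
    (Fintype.card X - 1) * #(blocks R x ∩ blocks R y) = #(blocks R x) * (b - 1) := by
  rw [← Finset.card_univ, ← Finset.card_erase_of_mem (Finset.mem_univ x)]
  refine Finset.card_mul_eq_card_mul R (fun z hz ↦ ?_) fun W hW ↦ ?_
  · rw [← h.card_blocks_inter_eq x z x y (Finset.ne_of_mem_erase hz).symm hxy]
    congr 1
    ext W
    simp [mem_blocks, Finset.bipartiteAbove]
  · have hxW : x ∈ ({z | R z W} : Finset X) := by simpa [mem_blocks] using hW
    rw [← h.card_points W, ← Finset.card_erase_of_mem hxW]
    congr 1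
    ext z
    simp [Finset.bipartiteBelow]

lemma card_blocks_inter_mul_card_le (h : IsTwoDesign R b) {x y : X} (hxy : x ≠ y) :
    #(blocks R x ∩ blocks R y) * Fintype.card Ω ≤ #(blocks R x) * #(blocks R y) := by
  have hX : 0 < Fintype.card X := Fintype.card_pos_iff.2 ⟨x⟩
  have hdeg := h.card_mul_card_blocks x
  have hpairs := h.sub_one_mul_card_blocks_inter hxy
  have hinter : #(blocks R x ∩ blocks R y) ≤ #(blocks R x) :=
    Finset.card_le_card Finset.inter_subset_left
  rw [← h.card_blocks_eq x y]
  generalize #(blocks R x ∩ blocks R y) = l, #(blocks R x) = r, Fintype.card X = v at *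
  have hlv : l * v ≤ r * b := by
    obtain rfl | hb := Nat.eq_zero_or_pos b
    · have hr : r = 0 := by simpa [hX.ne'] using hdeg
      simp [hr, Nat.le_zero.1 (hr ▸ hinter)]
    · calc l * v = (v - 1) * l + l := by rw [← Nat.add_one_mul, Nat.sub_add_cancel hX, mul_comm]
        _ ≤ r * (b - 1) + r := by rw [hpairs]; gcongr
        _ = r * b := by rw [← Nat.mul_add_one, Nat.sub_add_cancel hb]
  refine le_of_mul_le_mul_right ?_ hX
  calc l * Fintype.card Ω * v = l * v * Fintype.card Ω := by ring
    _ ≤ r * b * Fintype.card Ω := by gcongr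
    _ = r * (Fintype.card Ω * b) := by ring
    _ = r * r * v := by rw [← hdeg]; ring

lemma card_blocks_pos [Nonempty Ω] (h : IsTwoDesign R b) (hb : b ≠ 0) (x : X) :
    0 < #(blocks R x) := by
  refine Nat.pos_of_ne_zero fun hx ↦ ?_
  have := h.card_mul_card_blocks x
  simp_all

lemma sum_abs_planted_sub_uniform_le [Nonempty X] [Nonempty Ω] (h : IsTwoDesign R b) (hb : b ≠ 0)
    (m : ℕ) :
    ∑ V : Fin m → Ω, |productMixture (fun x ↦ uniformWeight (blocks R x)) m V -
      (Fintype.card Ω ^ m : ℝ)⁻¹| ≤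
      √((Fintype.card X : ℝ)⁻¹ * (Fintype.card X / b) ^ m) := by
  have hpos (x : X) : (0 : ℝ) < #(blocks R x) := Nat.cast_pos.2 (h.card_blocks_pos hb x)
  refine sum_abs_productMixture_sub_uniform_le (fun x ↦ uniformWeight_nonneg _)
    (fun x ↦ sum_uniformWeight (Finset.card_pos.1 (h.card_blocks_pos hb x))) (fun x ↦ ?_)
    (fun x y hxy ↦ ?_) m
  · have hx : (Fintype.card X : ℝ) * #(blocks R x) = Fintype.card Ω * b :=
      mod_cast h.card_mul_card_blocks x
    have hb' : (b : ℝ) ≠ 0 := Nat.cast_ne_zero.2 hb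
    have := (hpos x).ne'
    rw [sum_uniformWeight_mul_uniformWeight, Finset.inter_self]
    apply le_of_eq
    field_simp
    rw [← hx, mul_comm]
  · rw [sum_uniformWeight_mul_uniformWeight, ← mul_div_assoc,
      div_le_one (mul_pos (hpos x) (hpos y)), mul_comm]
    exact_mod_cast h.card_blocks_inter_mul_card_le hxy

end IsTwoDesign

end TwoDesign

section AffineGeometry

lemma exists_linearEquiv_apply_eq {K V : Type*} [DivisionRing K] [AddCommGroup V] [Module K V]
    {v w : V} (hv : v ≠ 0) (hw : w ≠ 0) : ∃ g : V ≃ₗ[K] V, g v = w := by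
  let f := (LinearEquiv.toSpanNonzeroSingleton K V v hv).symm ≪≫ₗ
    LinearEquiv.toSpanNonzeroSingleton K V w hw
  obtain ⟨g, hg⟩ := Submodule.exists_linearEquiv_restrict_eq f
  refine ⟨g, ?_⟩
  have hv₁ := hg (LinearEquiv.toSpanNonzeroSingleton K V v hv 1)
  simp only [f, LinearEquiv.trans_apply, LinearEquiv.symm_apply_apply] at hv₁
  simpa using hv₁.symm

lemma exists_affineEquiv_apply_eq_and_apply_eq {K V : Type*} [DivisionRing K] [AddCommGroup V]
    [Module K V] {x y x' y' : V} (h : x ≠ y) (h' : x' ≠ y') :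
    ∃ e : V ≃ᵃ[K] V, e x = x' ∧ e y = y' := by
  obtain ⟨g, hg⟩ := exists_linearEquiv_apply_eq (K := K) (sub_ne_zero.2 h.symm)
    (sub_ne_zero.2 h'.symm)
  refine ⟨g.toAffineEquiv.trans (AffineEquiv.constVAdd K V (x' - g x)), by simp, ?_⟩
  calc x' - g x + g y = g (y - x) + x' := by rw [map_sub]; abel
    _ = y' := by rw [hg, sub_add_cancel]

lemma natCard_affineSubspace {K V P : Type*} [Ring K] [AddCommGroup V] [Module K V]
    [AddTorsor V P] (A : AffineSubspace K P) [Nonempty A] :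
    Nat.card A = Nat.card A.direction :=
  Nat.card_congr (Equiv.vaddConst (Classical.arbitrary A)).symm

end AffineGeometry

section Flats

variable {n k : ℕ}

lemma IsFlat.image {W : Set (F2n n)} (hW : IsFlat n k W) (e : F2n n ≃ᵃ[ZMod 2] F2n n) :
    IsFlat n k (e '' W) := by
  obtain ⟨A, rfl, hne, hdim⟩ := hW
  refine ⟨A.map e.toAffineMap, A.coe_map e.toAffineMap, hne.image _, ?_⟩
  rw [AffineSubspace.map_direction, ← hdim]
  exact LinearEquiv.finrank_map_eq e.linear A.direction

namespace Flat

instance : Nonempty (Flat n k) := by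
  obtain ⟨v, hv⟩ : ∃ v : Fin (n - k) → F2n n, LinearIndependent (ZMod 2) v :=
    exists_linearIndependent_of_le_finrank (by simp)
  let U := Submodule.span (ZMod 2) (Set.range v)
  refine ⟨⟨U, U.toAffineSubspace, rfl, ⟨0, U.zero_mem⟩, ?_⟩⟩
  rw [Submodule.toAffineSubspace_direction, finrank_span_eq_card hv, Fintype.card_fin]

/-- The permutation of the `k`-flats induced by an affine automorphism. -/
noncomputable def map (e : F2n n ≃ᵃ[ZMod 2] F2n n) : Flat n k ≃ Flat n k where
  toFun W := ⟨e '' W.1, W.2.image e⟩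
  invFun W := ⟨e.symm '' W.1, W.2.image e.symm⟩
  left_inv W := Subtype.ext (e.toEquiv.symm_image_image W.1)
  right_inv W := Subtype.ext (e.toEquiv.image_symm_image W.1)

/-- Incidence between points and the complements of the `k`-flats. With complements as blocks,
`qx n k x` is the uniform distribution on the blocks through `x`. -/
def Avoids (x : F2n n) (W : Flat n k) : Prop := x ∉ W.1

lemma avoids_map (e : F2n n ≃ᵃ[ZMod 2] F2n n) (x : F2n n) (W : Flat n k) :
    Avoids (e x) (map e W) ↔ Avoids x W :=
  e.injective.mem_set_image.not

lemma card_blocks_avoids_inter_map (e : F2n n ≃ᵃ[ZMod 2] F2n n) (x y : F2n n) :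
    #(blocks (Avoids (k := k)) (e x) ∩ blocks Avoids (e y)) =
      #(blocks (Avoids (k := k)) x ∩ blocks Avoids y) :=
  (Finset.card_equiv (map e) fun W ↦ by simp [mem_blocks, avoids_map]).symm

lemma card_filter_mem (W : Flat n k) : #{x | x ∈ W.1} = 2 ^ (n - k) := by
  obtain ⟨_, A, rfl, hne, hdim⟩ := W
  have : Nonempty A := hne.to_subtype
  calc #{x | x ∈ A} = Nat.card A := by rw [Nat.card_eq_fintype_card, Fintype.card_subtype]
    _ = Nat.card A.direction := natCard_affineSubspace A
    _ = 2 ^ (n - k) := by rw [Module.natCard_eq_pow_finrank (K := ZMod 2), hdim, Nat.card_zmod]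

lemma isTwoDesign_avoids : IsTwoDesign (Avoids (n := n) (k := k)) (2 ^ n - 2 ^ (n - k)) where
  card_points W := by
    calc #{x | Avoids x W} = #({x | x ∈ W.1} : Finset (F2n n))ᶜ := by
          simp only [Avoids, Finset.compl_filter]; congr
      _ = 2 ^ n - 2 ^ (n - k) := by rw [Finset.card_compl, card_filter_mem]; simp
  card_blocks_eq x x' := by
    simpa using (card_blocks_avoids_inter_map (AffineEquiv.constVAdd (ZMod 2) _ (x' - x)) x x).symm
  card_blocks_inter_eq x y x' y' h h' := by
    obtain ⟨e, rfl, rfl⟩ := exists_affineEquiv_apply_eq_and_apply_eq (K := ZMod 2) h h'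
    exact (card_blocks_avoids_inter_map e x y).symm

end Flat

lemma qx_eq_uniformWeight (x : F2n n) : qx n k x = uniformWeight (blocks Flat.Avoids x) := by
  ext W
  have hcard : Nat.card {W : Flat n k // x ∉ W.1} = #(blocks (Flat.Avoids (k := k)) x) :=
    Nat.subtype_card _ fun W ↦ mem_blocks
  rw [qx, uniformWeight, hcard]
  simp only [mem_blocks, Flat.Avoids, ite_not]

lemma Pplanted_eq_productMixture (m : ℕ) :
    Pplanted n k m = productMixture (fun x ↦ uniformWeight (blocks Flat.Avoids x)) m := by
  ext V
  simp [Pplanted, productMixture, qx_eq_uniformWeight]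

lemma Punif_apply (m : ℕ) (V : Fin m → Flat n k) :
    Punif n k m V = (Fintype.card (Flat n k) ^ m : ℝ)⁻¹ := by
  simp [Punif, q0]

lemma sum_abs_Pplanted_sub_Punif_le (hk : 1 ≤ k) (hkn : k ≤ n) (m : ℕ) :
    ∑ V, |Pplanted n k m V - Punif n k m V| ≤
      √((1 / 2) ^ n * (1 - ((2 : ℝ) ^ k)⁻¹)⁻¹ ^ m) := by
  have hlt : 2 ^ (n - k) < 2 ^ n := Nat.pow_lt_pow_right one_lt_two (by lia)
  have hratio : (2 : ℝ) ^ n / ((2 ^ n - 2 ^ (n - k) : ℕ) : ℝ) = (1 - ((2 : ℝ) ^ k)⁻¹)⁻¹ := by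
    rw [Nat.cast_sub hlt.le]
    push_cast
    rw [pow_sub₀ _ two_ne_zero hkn, ← mul_one_sub, div_mul_cancel_left₀ (by positivity)]
  simpa [Pplanted_eq_productMixture, Punif_apply, hratio] using
    (Flat.isTwoDesign_avoids (n := n) (k := k)).sum_abs_planted_sub_uniform_le
      (Nat.sub_ne_zero_of_lt hlt) m

end Flats

section Threshold

lemma tendsto_pow_mul_pow_ceil {a b Δ : ℝ} (ha : 0 ≤ a) (hb : 1 ≤ b) (hΔ : 0 ≤ Δ)
    (h : a * b ^ Δ < 1) :
    Tendsto (fun n : ℕ ↦ a ^ n * b ^ ⌈Δ * n⌉₊) atTop (𝓝 0) := by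
  have hb₀ : 0 < b := zero_lt_one.trans_le hb
  have hlim : Tendsto (fun n : ℕ ↦ (a * b ^ Δ) ^ n * b) atTop (𝓝 0) := by
    simpa using (tendsto_pow_atTop_nhds_zero_of_lt_one (by positivity) h).mul_const b
  refine squeeze_zero (fun n ↦ by positivity) (fun n ↦ ?_) hlim
  calc a ^ n * b ^ ⌈Δ * n⌉₊ ≤ a ^ n * b ^ (Δ * n + 1) := by
        rw [← Real.rpow_natCast b]
        gcongr
        exact (Nat.ceil_lt_add_one (by positivity)).le
    _ = (a * b ^ Δ) ^ n * b := by
        rw [Real.rpow_add hb₀, Real.rpow_one, Real.rpow_mul hb₀.le, Real.rpow_natCast, mul_pow,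
          mul_assoc]

lemma one_sub_inv_two_pow_mem_Ioo {k : ℕ} (hk : 1 ≤ k) : 1 - ((2 : ℝ) ^ k)⁻¹ ∈ Set.Ioo 0 1 :=
  ⟨sub_pos.2 (inv_lt_one_of_one_lt₀ (one_lt_pow₀ one_lt_two (by lia))),
    sub_lt_self _ (by positivity)⟩

lemma half_mul_rpow_lt_one_of_lt_DeltaK {k : ℕ} (hk : 1 ≤ k) {Δ : ℝ} (hΔ : Δ < DeltaK k) :
    1 / 2 * (1 - ((2 : ℝ) ^ k)⁻¹)⁻¹ ^ Δ < 1 := by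
  obtain ⟨hpos, hlt⟩ := one_sub_inv_two_pow_mem_Ioo hk
  have hlog : Real.log (1 / 2) < Δ * Real.log (1 - ((2 : ℝ) ^ k)⁻¹) :=
    (lt_div_iff_of_neg (Real.log_neg hpos hlt)).1 hΔ
  rw [← Real.log_rpow hpos, Real.log_lt_log_iff (by norm_num) (by positivity)] at hlog
  rwa [Real.inv_rpow hpos.le, ← div_eq_mul_inv, div_lt_one (by positivity)]

end Threshold

theorem stmt8 (k : ℕ) (hk : 1 ≤ k) (Δ : ℝ) (hΔ : 0 < Δ) (hΔk : Δ < DeltaK k) :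
    Tendsto (fun n : ℕ =>
        (1/2 : ℝ) * ∑ V : Fin ⌈Δ * (n:ℝ)⌉₊ → Flat n k,
          |Pplanted n k ⌈Δ * (n:ℝ)⌉₊ V - Punif n k ⌈Δ * (n:ℝ)⌉₊ V|)
      atTop (nhds 0) := by
  have hlim : Tendsto (fun n : ℕ ↦
      1 / 2 * √((1 / 2) ^ n * (1 - ((2 : ℝ) ^ k)⁻¹)⁻¹ ^ ⌈Δ * (n : ℝ)⌉₊)) atTop (𝓝 0) := by
    obtain ⟨hpos, hlt⟩ := one_sub_inv_two_pow_mem_Ioo hk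
    have hchi := tendsto_pow_mul_pow_ceil (by norm_num) ((one_le_inv₀ hpos).2 hlt.le) hΔ.le
      (half_mul_rpow_lt_one_of_lt_DeltaK hk hΔk)
    simpa only [Real.sqrt_zero, mul_zero] using hchi.sqrt.const_mul (1 / 2)
  refine squeeze_zero' (Eventually.of_forall fun n ↦ by positivity) ?_ hlim
  filter_upwards [eventually_ge_atTop k] with n hkn
  gcongr
  exact sum_abs_Pplanted_sub_Punif_le hk hkn _
end
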